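/- Let L be an infeasible linear pencil of size m (in any number n of variables). Then −1 ∈ M_L^(2^(m−1)−1), i.e., there exist polynomials pᵢ ∈ ℝ[X₁,…,Xₙ] of degree at most 2^(m−1)−1 and vectors of polynomials vⱼ ∈ ℝ[X₁,…,Xₙ]ᵐ with all entries of degree at most 2^(m−1)−1 such that −1 = Σᵢ pᵢ² + Σⱼ vⱼᵀ L vⱼ. -/

import Mathlib

open MvPolynomial Matrix

/-- The linear pencil `L = A 0 + X 1 * A 1 + ... + X n * A n` as a symmetric matrix
with entries in the polynomial ring `ℝ[X 1, ..., X n]`. -/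
noncomputable def pencilPoly {n m : ℕ} (A : Fin (n+1) → Matrix (Fin m) (Fin m) ℝ) :
    Matrix (Fin m) (Fin m) (MvPolynomial (Fin n) ℝ) :=
  fun a b => MvPolynomial.C (A 0 a b) + ∑ i : Fin n, MvPolynomial.X i * MvPolynomial.C (A i.succ a b)

/-- Evaluation of the pencil at a point `x ∈ ℝⁿ`. -/
def pencilEval {n m : ℕ} (A : Fin (n+1) → Matrix (Fin m) (Fin m) ℝ) (x : Fin n → ℝ) :
    Matrix (Fin m) (Fin m) ℝ :=
  A 0 + ∑ i : Fin n, x i • A i.succ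

/-- The spectrahedron `S_L = {x ∈ ℝⁿ ∣ L(x) ⪰ 0}`. -/
def specSet {n m : ℕ} (A : Fin (n+1) → Matrix (Fin m) (Fin m) ℝ) : Set (Fin n → ℝ) :=
  {x | (pencilEval A x).PosSemidef}

/-- `vᵀ L v` for a vector `v` of polynomials. -/
noncomputable def vLv {n m : ℕ} (A : Fin (n+1) → Matrix (Fin m) (Fin m) ℝ)
    (v : Fin m → MvPolynomial (Fin n) ℝ) : MvPolynomial (Fin n) ℝ :=
  ∑ a : Fin m, ∑ b : Fin m, v a * pencilPoly A a b * v b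

/-- Membership in the quadratic module `M_L` associated to the pencil `L`:
`p = s + Σⱼ vⱼᵀ L vⱼ` with `s` a sum of squares. -/
def memQM {n m : ℕ} (A : Fin (n+1) → Matrix (Fin m) (Fin m) ℝ)
    (p : MvPolynomial (Fin n) ℝ) : Prop :=
  ∃ (k r : ℕ) (q : Fin k → MvPolynomial (Fin n) ℝ)
    (v : Fin r → Fin m → MvPolynomial (Fin n) ℝ),
    p = ∑ i, (q i)^2 + ∑ j, vLv A (v j)

/-- Membership in the truncated quadratic module `M_L^(k)` associated to `L`:
`p = Σᵢ pᵢ² + Σⱼ vⱼᵀ L vⱼ` where the `pᵢ` and all entries of the `vⱼ` have degree `≤ k`. -/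
def memQMdeg {n m : ℕ} (A : Fin (n+1) → Matrix (Fin m) (Fin m) ℝ) (k : ℕ)
    (p : MvPolynomial (Fin n) ℝ) : Prop :=
  ∃ (k₁ k₂ : ℕ) (q : Fin k₁ → MvPolynomial (Fin n) ℝ)
    (v : Fin k₂ → Fin m → MvPolynomial (Fin n) ℝ),
    (∀ i, (q i).totalDegree ≤ k) ∧ (∀ j a, (v j a).totalDegree ≤ k) ∧
    p = ∑ i, (q i)^2 + ∑ j, vLv A (v j)

/-!
Let `P` be a symmetric matrix with affine entries and `G` a set of affine equations. If no point
satisfies `P ⪰ 0` together with `G`, separating the compact convex hull of `1` and the polynomials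
`uᵀ P u` from the span of `G` yields a certificate of degree zero: either `-1` or some `-uᵀ P u`
with `u ≠ 0` lies in the quadratic module. In the second case `-(q * (P u)ᵢ)²` lies in it for every
polynomial `q`, and since `f + ε = ε (1 + f / (2ε))² - f² / (4ε)`, the polynomials `q * (P u)ᵢ` lie
in it up to an arbitrarily small positive constant. Hence the entries of `P u` may be added to the
equations `G`. Given `P u = 0` and `uₐ ≠ 0`, deleting row and column `a` of `P` does not change
feasibility, so one concludes by induction on the size of `P`. Each such reduction takes degree `d`
to `2 * d + 1`, and a matrix of size one needs only degree zero: this is `2 ^ (m - 1) - 1`.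
-/

section Convex

theorem isCompact_convexHull_of_finiteDimensional {E : Type*} [AddCommGroup E] [Module ℝ E]
    [TopologicalSpace E] [ContinuousAdd E] [ContinuousSMul ℝ E] [FiniteDimensional ℝ E]
    {s : Set E} (hs : IsCompact s) : IsCompact (convexHull ℝ s) := by
  have hull_eq : convexHull ℝ s = ⋃ k ∈ Finset.range (Module.finrank ℝ E + 2),
      (fun p : (Fin k → ℝ) × (Fin k → E) => ∑ i, p.1 i • p.2 i) ''
        (stdSimplex ℝ (Fin k) ×ˢ Set.univ.pi fun _ => s) := by
    ext x
    simp only [Set.mem_iUnion, Set.mem_image, Finset.mem_range, Prod.exists, Set.mem_prod,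
      Set.mem_univ_pi, exists_prop]
    constructor
    · intro hx
      obtain ⟨ι, _, z, w, hz, hind, hw, hw1, rfl⟩ := eq_pos_convex_span_of_mem_convexHull hx
      let e := Fintype.equivFin ι
      have hcard : Fintype.card ι ≤ Module.finrank ℝ E + 1 :=
        hind.card_le_finrank_succ.trans (by gcongr; exact Submodule.finrank_le _)
      refine ⟨Fintype.card ι, by lia, w ∘ e.symm, z ∘ e.symm,
        ⟨⟨fun i => (hw _).le, ?_⟩, fun i => hz ⟨_, rfl⟩⟩, ?_⟩
      · rw [← hw1]; exact e.symm.sum_comp w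
      · exact e.symm.sum_comp fun i => w i • z i
    · rintro ⟨k, -, w, z, ⟨⟨hw, hw1⟩, hz⟩, rfl⟩
      exact mem_convexHull_of_exists_fintype w z hw hw1 hz rfl
  rw [hull_eq]
  refine (Finset.range _).isCompact_biUnion fun k _ => ?_
  refine ((isCompact_stdSimplex ℝ (Fin k)).prod (isCompact_univ_pi fun _ => hs)).image ?_
  fun_prop

theorem exists_pos_on_of_disjoint_convexHull {E : Type*} [AddCommGroup E] [Module ℝ E]
    [TopologicalSpace E] [IsTopologicalAddGroup E] [ContinuousSMul ℝ E] [T2Space E]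
    [LocallyConvexSpace ℝ E] [FiniteDimensional ℝ E] {s : Set E} (hs : IsCompact s)
    {W : Submodule ℝ E} (hsW : Disjoint (convexHull ℝ s) (W : Set E)) :
    ∃ f : StrongDual ℝ E, (∀ z ∈ s, 0 < f z) ∧ ∀ w ∈ W, f w = 0 := by
  obtain ⟨f, r, t, hW, hrt, hs⟩ := geometric_hahn_banach_closed_compact W.convex
    (Submodule.closed_of_finiteDimensional W) (convex_convexHull ℝ s)
    (isCompact_convexHull_of_finiteDimensional hs) hsW.symm
  have hr : 0 < r := by simpa using hW 0 W.zero_mem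
  refine ⟨f, fun z hz => hr.trans (hrt.trans (hs z (subset_convexHull ℝ s hz))), fun w hw => ?_⟩
  by_contra hfw
  simpa [hfw] using hW ((r / f w) • w) (W.smul_mem _ hw)

end Convex

section QuadraticForm

theorem dotProduct_mulVec_add_self {R ι : Type*} [CommSemiring R] [Fintype ι] {M : Matrix ι ι R}
    (hM : M.IsSymm) (x y : ι → R) :
    (x + y) ⬝ᵥ M *ᵥ (x + y) = x ⬝ᵥ M *ᵥ x + 2 * (y ⬝ᵥ M *ᵥ x) + y ⬝ᵥ M *ᵥ y := by
  have hxy : x ⬝ᵥ M *ᵥ y = y ⬝ᵥ M *ᵥ x := by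
    rw [dotProduct_mulVec, ← mulVec_transpose, hM.eq, dotProduct_comm]
  simp only [mulVec_add, add_dotProduct, dotProduct_add, hxy]
  ring

theorem smul_dotProduct_mulVec_smul {R ι : Type*} [CommSemiring R] [Fintype ι]
    (M : Matrix ι ι R) (c : R) (v : ι → R) : (c • v) ⬝ᵥ M *ᵥ (c • v) = c ^ 2 * (v ⬝ᵥ M *ᵥ v) := by
  rw [mulVec_smul, smul_dotProduct, dotProduct_smul, smul_eq_mul, smul_eq_mul, sq, mul_assoc]

theorem comp_dotProduct_submatrix_mulVec_comp {R ι κ : Type*} [NonUnitalNonAssocSemiring R]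
    [Fintype ι] [Fintype κ] (M : Matrix ι ι R) {e : κ → ι} (he : Function.Injective e)
    {v : ι → R} (hv : ∀ i ∉ Set.range e, v i = 0) :
    (v ∘ e) ⬝ᵥ M.submatrix e e *ᵥ (v ∘ e) = v ⬝ᵥ M *ᵥ v := by
  refine Fintype.sum_of_injective e he _ _ (fun i hi => by rw [hv i hi, zero_mul]) fun k => ?_
  refine congrArg (v (e k) * ·) ?_
  exact Fintype.sum_of_injective e he _ _ (fun i hi => by rw [hv i hi, mul_zero]) fun _ => rfl

theorem posSemidef_of_submatrix_of_mulVec_eq_zero {ι κ : Type*} [Fintype ι]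
    {M : Matrix ι ι ℝ} (hM : M.IsSymm) {u : ι → ℝ} (hu : M *ᵥ u = 0) {a : ι} (ha : u a ≠ 0)
    {e : κ → ι} (he : Function.Injective e) (hea : {a}ᶜ ⊆ Set.range e)
    (hsub : (M.submatrix e e).PosSemidef) : M.PosSemidef := by
  have : Fintype κ := @Fintype.ofFinite κ (Finite.of_injective e he)
  refine .of_dotProduct_mulVec_nonneg hM fun y => ?_
  rw [star_trivial]
  obtain ⟨c, w, hw, rfl⟩ : ∃ (c : ℝ) (w : ι → ℝ), w a = 0 ∧ y = c • u + w :=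
    ⟨y a / u a, y - (y a / u a) • u, by simp [ha], by simp⟩
  have hw_range : ∀ i ∉ Set.range e, w i = 0 := fun i hi => by
    rwa [Set.mem_singleton_iff.1 (by_contra fun h => hi (hea h))]
  rw [dotProduct_mulVec_add_self hM, mulVec_smul, hu,
    ← comp_dotProduct_submatrix_mulVec_comp M he hw_range]
  simpa using hsub.dotProduct_mulVec_nonneg (w ∘ e)

end QuadraticForm

section Affine

variable {σ : Type*}

theorem eq_smul_one_add_sum_smul_X_of_totalDegree_le_one [Fintype σ] {R : Type*} [CommSemiring R]
    {p : MvPolynomial σ R} (hp : p.totalDegree ≤ 1) :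
    p = coeff 0 p • 1 + ∑ i, coeff (Finsupp.single i 1) p • X i := by
  classical
  ext d
  simp only [coeff_add, coeff_sum, coeff_smul, coeff_one, coeff_X, smul_eq_mul, mul_ite, mul_one,
    mul_zero]
  obtain hd | hd | hd : d.degree = 0 ∨ d.degree = 1 ∨ 1 < d.degree := by lia
  · obtain rfl := (Finsupp.degree_eq_zero_iff d).1 hd
    simp
  · obtain ⟨j, rfl⟩ := (Finsupp.sum_eq_one_iff d).1 hd
    simp [Finsupp.single_left_inj, eq_comm (a := (0 : σ →₀ ℕ))]
  · have hd_zero : 0 ≠ d := by rintro rfl; simp at hd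
    have hd_single (i : σ) : Finsupp.single i 1 ≠ d := by rintro rfl; simp at hd
    simp [hd_zero, hd_single, coeff_eq_zero_of_totalDegree_lt (hp.trans_lt hd)]

/-- The coefficients of the affine part of a polynomial: its constant and its linear terms. They
identify affine polynomials with a space in which compactness and separation are available. -/
noncomputable def affineCoeffs (σ : Type*) : MvPolynomial σ ℝ →ₗ[ℝ] ℝ × (σ → ℝ) :=
  (lcoeff ℝ 0).prod (LinearMap.pi fun i => lcoeff ℝ (Finsupp.single i 1))

theorem affineCoeffs_injOn [Finite σ] : Set.InjOn (affineCoeffs σ) (restrictTotalDegree σ ℝ 1) := by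
  have := Fintype.ofFinite σ
  intro p hp q hq hpq
  rw [SetLike.mem_coe, mem_restrictTotalDegree] at hp hq
  have hpq0 : coeff 0 p = coeff 0 q := congrArg Prod.fst hpq
  have hpq1 (i : σ) : coeff (Finsupp.single i 1) p = coeff (Finsupp.single i 1) q :=
    congrFun (congrArg Prod.snd hpq) i
  rw [eq_smul_one_add_sum_smul_X_of_totalDegree_le_one hp,
    eq_smul_one_add_sum_smul_X_of_totalDegree_le_one hq]
  simp only [hpq0, hpq1]

theorem eval_eq_of_map_one_of_totalDegree_le_one [Finite σ] {f : MvPolynomial σ ℝ →ₗ[ℝ] ℝ}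
    (hf : f 1 = 1) {p : MvPolynomial σ ℝ} (hp : p.totalDegree ≤ 1) :
    eval (fun i => f (X i)) p = f p := by
  have := Fintype.ofFinite σ
  rw [eq_smul_one_add_sum_smul_X_of_totalDegree_le_one hp]
  simp [hf, smul_eval]

end Affine

section ConstForm

variable {σ ι : Type*} [Fintype ι]

/-- The polynomial `uᵀ P u` for a polynomial matrix `P` and a vector `u` of constants. -/
noncomputable def constForm (P : Matrix ι ι (MvPolynomial σ ℝ)) (u : ι → ℝ) : MvPolynomial σ ℝ :=
  (C ∘ u) ⬝ᵥ P *ᵥ (C ∘ u)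

theorem constForm_eq_sum_smul (P : Matrix ι ι (MvPolynomial σ ℝ)) (u : ι → ℝ) :
    constForm P u = ∑ i, ∑ j, (u i * u j) • P i j := by
  simp only [constForm, dotProduct, mulVec, Finset.mul_sum, Function.comp_apply, smul_eq_C_mul,
    C_mul]
  exact Finset.sum_congr rfl fun i _ => Finset.sum_congr rfl fun j _ => by ring

theorem constForm_smul (P : Matrix ι ι (MvPolynomial σ ℝ)) (c : ℝ) (u : ι → ℝ) :
    constForm P (c • u) = c ^ 2 • constForm P u := by
  have hcu : (C ∘ (c • u) : ι → MvPolynomial σ ℝ) =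
      (C c : MvPolynomial σ ℝ) • (C ∘ u : ι → MvPolynomial σ ℝ) := funext fun i => C_mul
  rw [constForm, hcu, smul_dotProduct_mulVec_smul, smul_eq_C_mul, C_pow, constForm]

theorem eval_constForm (P : Matrix ι ι (MvPolynomial σ ℝ)) (u : ι → ℝ) (x : σ → ℝ) :
    eval x (constForm P u) = u ⬝ᵥ P.map (eval x) *ᵥ u := by
  simp [constForm, dotProduct, mulVec, Function.comp_apply]

theorem totalDegree_mulVec_C_le {P : Matrix ι ι (MvPolynomial σ ℝ)} {k : ℕ}
    (hP : ∀ i j, (P i j).totalDegree ≤ k) (u : ι → ℝ) (i : ι) :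
    ((P *ᵥ (C ∘ u)) i).totalDegree ≤ k :=
  totalDegree_finsetSum_le fun j _ =>
    (totalDegree_mul _ _).trans (by simpa using hP i j)

theorem totalDegree_constForm_le {P : Matrix ι ι (MvPolynomial σ ℝ)} {k : ℕ}
    (hP : ∀ i j, (P i j).totalDegree ≤ k) (u : ι → ℝ) : (constForm P u).totalDegree ≤ k :=
  totalDegree_finsetSum_le fun i _ =>
    (totalDegree_mul _ _).trans (by simpa using totalDegree_mulVec_C_le hP u i)

/-- The constant `1` and the polynomials `uᵀ P u` for unit vectors `u`: a compact base of the cone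
of degree-zero certificates. The norm is the sup norm of `ι → ℝ`; any norm would do. -/
def certificateBase (P : Matrix ι ι (MvPolynomial σ ℝ)) : Set (MvPolynomial σ ℝ) :=
  insert 1 (constForm P '' Metric.sphere 0 1)

theorem totalDegree_le_of_mem_certificateBase {P : Matrix ι ι (MvPolynomial σ ℝ)} {k : ℕ}
    (hP : ∀ i j, (P i j).totalDegree ≤ k) :
    ∀ p ∈ certificateBase P, p.totalDegree ≤ k := by
  rintro p (rfl | ⟨u, -, rfl⟩)
  exacts [by simp, totalDegree_constForm_le hP u]

theorem isCompact_affineCoeffs_image_certificateBase (P : Matrix ι ι (MvPolynomial σ ℝ)) :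
    IsCompact (affineCoeffs σ '' certificateBase P) := by
  rw [certificateBase, Set.image_insert_eq, ← Set.image_comp]
  refine ((isCompact_sphere 0 1).image ?_).insert _
  simp only [Function.comp_def, constForm_eq_sum_smul, map_sum, map_smul]
  fun_prop

end ConstForm

section Feasible

variable {σ ι κ : Type*} [Fintype ι] {P : Matrix ι ι (MvPolynomial σ ℝ)}
  {G : Set (MvPolynomial σ ℝ)}

/-- The points at which the polynomial matrix `P` is positive semidefinite and all polynomials
of `G` vanish. -/
def feasibleSet (P : Matrix ι ι (MvPolynomial σ ℝ)) (G : Set (MvPolynomial σ ℝ)) : Set (σ → ℝ) :=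
  {x | (P.map (eval x)).PosSemidef ∧ ∀ g ∈ G, eval x g = 0}

theorem posSemidef_map_eval (hP : P.IsSymm) {x : σ → ℝ}
    (hx : ∀ u ∈ Metric.sphere (0 : ι → ℝ) 1, 0 ≤ eval x (constForm P u)) :
    (P.map (eval x)).PosSemidef := by
  refine .of_dotProduct_mulVec_nonneg (isHermitian_iff_isSymm.2 (hP.map _)) fun w => ?_
  rw [star_trivial, ← eval_constForm]
  obtain rfl | hw := eq_or_ne w 0
  · simp [constForm_eq_sum_smul]
  have hw_norm := norm_ne_zero_iff.2 hw
  rw [← smul_inv_smul₀ hw_norm w, constForm_smul, smul_eval]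
  exact mul_nonneg (sq_nonneg _) (hx _ (by simp [norm_smul, hw_norm]))

theorem feasibleSet_nonempty_of_disjoint [Finite σ] (hP : P.IsSymm)
    (hPdeg : ∀ i j, (P i j).totalDegree ≤ 1) (hGdeg : ∀ g ∈ G, g.totalDegree ≤ 1)
    (hdisj : Disjoint (convexHull ℝ (certificateBase P)) (Submodule.span ℝ G : Set _)) :
    (feasibleSet P G).Nonempty := by
  have affine_span : Submodule.span ℝ G ≤ restrictTotalDegree σ ℝ 1 :=
    Submodule.span_le.2 fun g hg => (mem_restrictTotalDegree _ _ _).2 (hGdeg g hg)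
  have affine_hull : convexHull ℝ (certificateBase P) ⊆ restrictTotalDegree σ ℝ 1 :=
    convexHull_min (fun p hp => (mem_restrictTotalDegree _ _ _).2
      (totalDegree_le_of_mem_certificateBase hPdeg p hp)) (Submodule.convex _)
  have hdisj' : Disjoint (convexHull ℝ (affineCoeffs σ '' certificateBase P))
      ((Submodule.span ℝ G).map (affineCoeffs σ) : Set _) := by
    rw [Submodule.map_coe, ← (affineCoeffs σ).image_convexHull, Set.disjoint_iff_inter_eq_empty,
      ← affineCoeffs_injOn.image_inter affine_hull affine_span, hdisj.inter_eq, Set.image_empty]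
  obtain ⟨φ, hφpos, hφzero⟩ := exists_pos_on_of_disjoint_convexHull
    (isCompact_affineCoeffs_image_certificateBase P) hdisj'
  have hpos : ∀ p ∈ certificateBase P, 0 < φ (affineCoeffs σ p) :=
    fun p hp => hφpos _ ⟨p, hp, rfl⟩
  have hone := hpos 1 (Set.mem_insert _ _)
  let f : MvPolynomial σ ℝ →ₗ[ℝ] ℝ := (φ (affineCoeffs σ 1))⁻¹ • φ.toLinearMap ∘ₗ affineCoeffs σ
  have hf : f 1 = 1 := inv_mul_cancel₀ hone.ne'
  refine ⟨fun i => f (X i), posSemidef_map_eval hP fun u hu => ?_, fun g hg => ?_⟩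
  · rw [eval_eq_of_map_one_of_totalDegree_le_one hf (totalDegree_constForm_le hPdeg u)]
    exact mul_nonneg (inv_nonneg.2 hone.le) (hpos _ (Set.mem_insert_of_mem _ ⟨u, hu, rfl⟩)).le
  · rw [eval_eq_of_map_one_of_totalDegree_le_one hf (hGdeg g hg)]
    simp [f, hφzero _ (Submodule.mem_map_of_mem (Submodule.subset_span hg))]

theorem feasibleSet_submatrix_subset (hP : P.IsSymm) {u : ι → ℝ} {a : ι} (ha : u a ≠ 0)
    {e : κ → ι} (he : Function.Injective e) (hea : {a}ᶜ ⊆ Set.range e) :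
    feasibleSet (P.submatrix e e) (G ∪ Set.range (P *ᵥ (C ∘ u))) ⊆ feasibleSet P G := by
  rintro x ⟨hpsd, hx⟩
  refine ⟨posSemidef_of_submatrix_of_mulVec_eq_zero (hP.map _) ?_ ha he hea hpsd,
    fun g hg => hx g (.inl hg)⟩
  ext i
  simpa [mulVec, dotProduct] using hx _ (.inr ⟨i, rfl⟩)

end Feasible

/-- The quadratic module of the polynomial matrix `P` truncated at degree `d`, enlarged by the
multiples `q * g` of the equations `g ∈ G` with `q` of degree at most `2 * d`. The factor `2` makes
it stable under multiplication by squares, at the cost of raising `d` by the degree of the root. -/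
noncomputable def truncQM {σ ι : Type*} [Fintype ι] (P : Matrix ι ι (MvPolynomial σ ℝ))
    (G : Set (MvPolynomial σ ℝ)) (d : ℕ) : AddSubmonoid (MvPolynomial σ ℝ) :=
  AddSubmonoid.closure
    ({f | ∃ q : MvPolynomial σ ℝ, q.totalDegree ≤ d ∧ q ^ 2 = f} ∪
      {f | ∃ v : ι → MvPolynomial σ ℝ, (∀ i, (v i).totalDegree ≤ d) ∧ v ⬝ᵥ P *ᵥ v = f} ∪
      {f | ∃ q : MvPolynomial σ ℝ, q.totalDegree ≤ 2 * d ∧ ∃ g ∈ G, q * g = f})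

namespace truncQM

variable {σ ι κ : Type*} [Fintype ι] [Fintype κ] {P : Matrix ι ι (MvPolynomial σ ℝ)}
  {G H : Set (MvPolynomial σ ℝ)} {f p q : MvPolynomial σ ℝ} {c : ℝ} {d e k : ℕ}

theorem sq_mem (hq : q.totalDegree ≤ d) : q ^ 2 ∈ truncQM P G d :=
  AddSubmonoid.subset_closure (.inl (.inl ⟨q, hq, rfl⟩))

theorem dotProduct_mulVec_mem {v : ι → MvPolynomial σ ℝ} (hv : ∀ i, (v i).totalDegree ≤ d) :
    v ⬝ᵥ P *ᵥ v ∈ truncQM P G d :=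
  AddSubmonoid.subset_closure (.inl (.inr ⟨v, hv, rfl⟩))

theorem mul_mem (hq : q.totalDegree ≤ 2 * d) {g : MvPolynomial σ ℝ} (hg : g ∈ G) :
    q * g ∈ truncQM P G d :=
  AddSubmonoid.subset_closure (.inr ⟨q, hq, g, hg, rfl⟩)

theorem le_of_generators_mem {N : AddSubmonoid (MvPolynomial σ ℝ)}
    (hsq : ∀ q : MvPolynomial σ ℝ, q.totalDegree ≤ d → q ^ 2 ∈ N)
    (hform : ∀ v : ι → MvPolynomial σ ℝ, (∀ i, (v i).totalDegree ≤ d) → v ⬝ᵥ P *ᵥ v ∈ N)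
    (hmul : ∀ q : MvPolynomial σ ℝ, q.totalDegree ≤ 2 * d → ∀ g ∈ G, q * g ∈ N) :
    truncQM P G d ≤ N := by
  refine AddSubmonoid.closure_le.2 ?_
  rintro f ((⟨q, hq, rfl⟩ | ⟨v, hv, rfl⟩) | ⟨q, hq, g, hg, rfl⟩)
  exacts [hsq q hq, hform v hv, hmul q hq g hg]

theorem mono (hde : d ≤ e) : truncQM P G d ≤ truncQM P G e :=
  le_of_generators_mem (fun _ hq => sq_mem (hq.trans hde))
    (fun _ hv => dotProduct_mulVec_mem fun i => (hv i).trans hde)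
    fun _ hq _ hg => mul_mem (hq.trans (by lia)) hg

theorem sq_mul_mem (hp : p.totalDegree ≤ e) (hf : f ∈ truncQM P G d) :
    p ^ 2 * f ∈ truncQM P G (d + e) := by
  suffices truncQM P G d ≤ (truncQM P G (d + e)).comap (AddMonoidHom.mulLeft (p ^ 2)) from this hf
  refine le_of_generators_mem (fun q hq => ?_) (fun v hv => ?_) fun q hq g hg => ?_ <;>
    simp only [AddSubmonoid.mem_comap, AddMonoidHom.coe_mulLeft]
  · rw [← mul_pow]
    exact sq_mem ((totalDegree_mul _ _).trans (by lia))
  · rw [← smul_dotProduct_mulVec_smul]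
    exact dotProduct_mulVec_mem fun i => (totalDegree_mul _ _).trans (by have := hv i; lia)
  · rw [← mul_assoc]
    refine mul_mem ((totalDegree_mul _ _).trans ?_) hg
    have := totalDegree_pow p 2
    lia

theorem smul_mem (hc : 0 ≤ c) (hf : f ∈ truncQM P G d) : c • f ∈ truncQM P G d := by
  have hroot : (C √c ^ 2 : MvPolynomial σ ℝ) * f = c • f := by
    rw [← C_pow, Real.sq_sqrt hc, smul_eq_C_mul]
  have hmem : (C √c) ^ 2 * f ∈ truncQM P G (d + 0) := sq_mul_mem (totalDegree_C _).le hf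
  rwa [hroot] at hmem

theorem C_mem (hc : 0 ≤ c) : C c ∈ truncQM P G d := by
  simpa [smul_eq_C_mul] using smul_mem hc (sq_mem (P := P) (G := G) (d := d) (q := 1) (by simp))

theorem constForm_mem (u : ι → ℝ) : constForm P u ∈ truncQM P G d :=
  dotProduct_mulVec_mem fun i => by simp

theorem mul_mem_of_mem_span (hq : q.totalDegree ≤ 2 * d) {g : MvPolynomial σ ℝ}
    (hg : g ∈ Submodule.span ℝ G) : q * g ∈ truncQM P G d := by
  induction hg using Submodule.span_induction generalizing q with
  | mem g hg => exact mul_mem hq hg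
  | zero => simp
  | add g h _ _ hg hh => exact mul_add q g h ▸ add_mem (hg hq) (hh hq)
  | smul c g _ hg =>
    rw [mul_smul_comm, ← smul_mul_assoc]
    exact hg ((totalDegree_smul_le _ _).trans hq)

theorem exists_neg_mem_of_mem_convexHull {s : Set (MvPolynomial σ ℝ)}
    (hs : s ⊆ truncQM P G d) (hp : p ∈ convexHull ℝ s) (hneg : -p ∈ truncQM P G d) :
    ∃ z ∈ s, -z ∈ truncQM P G d := by
  classical
  obtain ⟨ι, _, w, z, hw, hw1, hz, rfl⟩ := mem_convexHull_iff_exists_fintype.1 hp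
  obtain ⟨i, -, hi⟩ : ∃ i ∈ Finset.univ, 0 < w i := Finset.exists_lt_of_sum_lt (by simp [hw1])
  have hrest : ∑ j ∈ Finset.univ.erase i, w j • z j ∈ truncQM P G d :=
    sum_mem fun j _ => smul_mem (hw j) (hs (hz j))
  refine ⟨z i, hz i, ?_⟩
  convert smul_mem (inv_nonneg.2 hi.le) (add_mem hrest hneg) using 1
  rw [← Finset.add_sum_erase _ _ (Finset.mem_univ i), neg_add_rev, add_neg_cancel_left, smul_neg,
    inv_smul_smul₀ hi.ne']

theorem neg_one_mem_or_exists_neg_constForm_mem [Finite σ] (hP : P.IsSymm)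
    (hPdeg : ∀ i j, (P i j).totalDegree ≤ 1) (hGdeg : ∀ g ∈ G, g.totalDegree ≤ 1)
    (hinf : feasibleSet P G = ∅) :
    -1 ∈ truncQM P G 0 ∨ ∃ u ≠ 0, -constForm P u ∈ truncQM P G 0 := by
  obtain ⟨p, hp_hull, hp_span⟩ := Set.not_disjoint_iff.1 <|
    mt (feasibleSet_nonempty_of_disjoint hP hPdeg hGdeg) (Set.not_nonempty_iff_eq_empty.2 hinf)
  have hbase : certificateBase P ⊆ truncQM P G 0 := by
    rintro z (rfl | ⟨u, -, rfl⟩)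
    exacts [C_1 (σ := σ) (R := ℝ) ▸ C_mem zero_le_one, constForm_mem u]
  have hp_neg : -p ∈ truncQM P G 0 :=
    neg_one_mul p ▸ mul_mem_of_mem_span (by simp) hp_span
  obtain ⟨z, rfl | ⟨u, hu, rfl⟩, hz⟩ := exists_neg_mem_of_mem_convexHull hbase hp_hull hp_neg
  · exact .inl hz
  · exact .inr ⟨u, ne_zero_of_mem_unit_sphere ⟨u, hu⟩, hz⟩

-- For `w = -(q * b)`, where `b` is the `i`-th entry of `P u`, and `p = q * (1 + P i i) / 2`, the
-- form at `p • u + w • eᵢ` is `p² * uᵀ P u - (q * b)²`.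
theorem neg_sq_mul_mulVec_mem (hP : P.IsSymm) (hPdeg : ∀ i j, (P i j).totalDegree ≤ k)
    {u : ι → ℝ} (hu : -constForm P u ∈ truncQM P G 0) (hq : q.totalDegree ≤ d) (i : ι) :
    -(q * (P *ᵥ (C ∘ u)) i) ^ 2 ∈ truncQM P G (d + k) := by
  classical
  set b := (P *ᵥ (C ∘ u)) i with hb
  have hb_deg : (-(q * b)).totalDegree ≤ d + k :=
    (totalDegree_neg _).trans_le <|
      (totalDegree_mul _ _).trans (add_le_add hq (totalDegree_mulVec_C_le hPdeg u i))
  obtain ⟨p, hp⟩ : ∃ p, p = (1 / 2 : ℝ) • (q * (1 + P i i)) := ⟨_, rfl⟩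
  have hp_two : 2 * p = q * (1 + P i i) := by
    rw [hp, two_mul, ← add_smul, add_halves, one_smul]
  have hp_deg : p.totalDegree ≤ d + k := by
    rw [hp]
    refine (totalDegree_smul_le _ _).trans ((totalDegree_mul _ _).trans (add_le_add hq ?_))
    exact (totalDegree_add _ _).trans (by simpa using hPdeg i i)
  have hform : (p • (C ∘ u) + Pi.single i (-(q * b))) ⬝ᵥ P *ᵥ
      (p • (C ∘ u) + Pi.single i (-(q * b))) = p ^ 2 * constForm P u - (q * b) ^ 2 := by
    rw [dotProduct_mulVec_add_self hP, smul_dotProduct_mulVec_smul, ← constForm, mulVec_smul,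
      single_dotProduct, single_dotProduct, Pi.smul_apply, ← hb, mulVec_single]
    simp only [smul_eq_mul, Pi.smul_apply, MulOpposite.smul_eq_mul_unop, MulOpposite.unop_op,
      Matrix.col_apply]
    linear_combination -(q * b ^ 2) * hp_two
  have hform_mem : p ^ 2 * constForm P u - (q * b) ^ 2 ∈ truncQM P G (d + k) := by
    refine hform ▸ dotProduct_mulVec_mem fun j => (totalDegree_add _ _).trans (max_le ?_ ?_)
    · exact (totalDegree_mul _ _).trans (by simpa using hp_deg)
    · obtain rfl | hji := eq_or_ne j i
      · simpa using hb_deg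
      · simp [hji]
  have hcancel := sq_mul_mem hp_deg hu
  rw [zero_add] at hcancel
  convert add_mem hform_mem hcancel using 1
  ring

/-- The polynomials `f` such that `f + ε` lies in the truncated quadratic module for every
`ε > 0`. -/
noncomputable def relaxation (P : Matrix ι ι (MvPolynomial σ ℝ)) (G : Set (MvPolynomial σ ℝ))
    (d : ℕ) : AddSubmonoid (MvPolynomial σ ℝ) where
  carrier := {f | ∀ ε : ℝ, 0 < ε → f + C ε ∈ truncQM P G d}
  zero_mem' ε hε := by simpa using C_mem hε.le
  add_mem' {f g} hf hg ε hε := by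
    have hfg := add_mem (hf (ε / 2) (half_pos hε)) (hg (ε / 2) (half_pos hε))
    rwa [add_add_add_comm, ← C_add, add_halves] at hfg

theorem le_relaxation : truncQM P G d ≤ relaxation P G d :=
  fun _ hf _ hε => add_mem hf (C_mem hε.le)

theorem neg_one_mem_of_mem_relaxation (h : -1 ∈ relaxation P G d) : -1 ∈ truncQM P G d := by
  have hhalf : (2 : ℝ) • (-1 + C (1 / 2)) = (-1 : MvPolynomial σ ℝ) := by
    rw [← C_1, ← C_neg, ← C_add, smul_eq_C_mul, ← C_mul]
    norm_num
  exact hhalf ▸ smul_mem zero_le_two (h (1 / 2) one_half_pos)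

theorem mem_relaxation_of_neg_sq_mem (hf : f.totalDegree ≤ d) (hneg : -f ^ 2 ∈ truncQM P G d) :
    f ∈ relaxation P G d := by
  intro ε hε
  have hsq : (1 + (1 / (2 * ε)) • f) ^ 2 ∈ truncQM P G d :=
    sq_mem ((totalDegree_add _ _).trans (by simpa using (totalDegree_smul_le _ _).trans hf))
  have hsum := add_mem (smul_mem hε.le hsq)
    (smul_mem (by positivity : 0 ≤ 1 / (4 * ε)) hneg)
  have hquarter : C ε * C (1 / (2 * ε)) ^ 2 = (C (1 / (4 * ε)) : MvPolynomial σ ℝ) := by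
    rw [← C_pow, ← C_mul]
    congr 1
    field_simp
    norm_num
  have hhalf : C ε * C (1 / (2 * ε)) * 2 = (1 : MvPolynomial σ ℝ) := by
    rw [mul_two, ← C_mul, ← C_add, ← C_1]
    congr 1
    field_simp
    norm_num
  convert hsum using 1
  simp only [smul_eq_C_mul]
  linear_combination -f * hhalf - f ^ 2 * hquarter

theorem submatrix_le_relaxation {a : κ → ι} (ha : Function.Injective a) (hde : d ≤ e)
    (hH : ∀ q : MvPolynomial σ ℝ, q.totalDegree ≤ 2 * d → ∀ g ∈ H, q * g ∈ relaxation P G e) :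
    truncQM (P.submatrix a a) (G ∪ H) d ≤ relaxation P G e := by
  refine le_of_generators_mem (fun q hq => le_relaxation (sq_mem (hq.trans hde)))
    (fun v hv => le_relaxation ?_) fun q hq g hg => ?_
  · rw [← Function.extend_comp ha v (0 : ι → MvPolynomial σ ℝ),
      comp_dotProduct_submatrix_mulVec_comp P ha fun i hi => by
        rw [Function.extend_apply' _ _ _ hi, Pi.zero_apply]]
    refine dotProduct_mulVec_mem fun i => ?_
    obtain ⟨k, rfl⟩ | hi := em (∃ k, a k = i)
    · simpa [ha.extend_apply] using (hv k).trans hde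
    · simp [Function.extend_apply' _ _ _ hi]
  · obtain hg | hg := hg
    · exact le_relaxation (mul_mem (hq.trans (by lia)) hg)
    · exact hH q hq g hg

theorem mul_mulVec_mem_of_subsingleton [Subsingleton ι] {u : ι → ℝ} (hu : u ≠ 0)
    (hneg : -constForm P u ∈ truncQM P G d) (hq : q.totalDegree = 0) (i : ι) :
    q * (P *ᵥ (C ∘ u)) i ∈ truncQM P G d := by
  obtain ⟨c, rfl⟩ : ∃ c, q = C c := ⟨_, totalDegree_eq_zero_iff_eq_C.1 hq⟩
  have hui : u i ≠ 0 := by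
    obtain ⟨j, hj⟩ := Function.ne_iff.1 hu
    rwa [Subsingleton.elim i j]
  have hrow : C c * (P *ᵥ (C ∘ u)) i = (c / u i) • constForm P u := by
    rw [constForm, dotProduct, Fintype.sum_subsingleton _ i, smul_eq_C_mul, ← mul_assoc,
      Function.comp_apply, ← C_mul, div_mul_cancel₀ _ hui]
  rw [hrow]
  obtain hc | hc := le_total 0 (c / u i)
  · exact smul_mem hc (constForm_mem u)
  · simpa using smul_mem (neg_nonneg.2 hc) hneg

theorem mul_mulVec_mem_relaxation (hP : P.IsSymm) (hPdeg : ∀ i j, (P i j).totalDegree ≤ 1)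
    {u : ι → ℝ} (hu : u ≠ 0) (hneg : -constForm P u ∈ truncQM P G 0)
    (hq : q.totalDegree ≤ 2 * (2 ^ (Fintype.card ι - 1 - 1) - 1)) (i : ι) :
    q * (P *ᵥ (C ∘ u)) i ∈ relaxation P G (2 ^ (Fintype.card ι - 1) - 1) := by
  obtain hι | hι := le_or_gt (Fintype.card ι) 1
  · have := Fintype.card_le_one_iff_subsingleton.1 hι
    refine le_relaxation (mul_mulVec_mem_of_subsingleton hu (mono (Nat.zero_le _) hneg) ?_ i)
    simpa [Nat.sub_eq_zero_of_le hι] using hq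
  · have hdouble : 2 ^ (Fintype.card ι - 1) - 1 = 2 * (2 ^ (Fintype.card ι - 1 - 1) - 1) + 1 := by
      obtain ⟨k, hk⟩ : ∃ k, Fintype.card ι = k + 2 := ⟨_, (Nat.sub_add_cancel hι).symm⟩
      have := Nat.one_le_two_pow (n := k)
      simp only [hk, Nat.add_sub_cancel, Nat.reduceSubDiff, pow_succ]
      lia
    rw [hdouble]
    exact mem_relaxation_of_neg_sq_mem
      ((totalDegree_mul _ _).trans (add_le_add hq (totalDegree_mulVec_C_le hPdeg u i)))
      (neg_sq_mul_mulVec_mem hP hPdeg hneg hq i)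

end truncQM

theorem neg_one_mem_truncatedQM_two_pow_size_general {σ ι : Type*} [Finite σ] [Fintype ι]
    {P : Matrix ι ι (MvPolynomial σ ℝ)} {G : Set (MvPolynomial σ ℝ)} (hP : P.IsSymm)
    (hPdeg : ∀ i j, (P i j).totalDegree ≤ 1) (hGdeg : ∀ g ∈ G, g.totalDegree ≤ 1)
    (hinf : feasibleSet P G = ∅) : -1 ∈ truncQM P G (2 ^ (Fintype.card ι - 1) - 1) := by
  classical
  induction hn : Fintype.card ι using Nat.strong_induction_on generalizing ι G with
  | h n ih =>
    subst hn
    obtain hone | ⟨u, hu, hneg⟩ :=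
      truncQM.neg_one_mem_or_exists_neg_constForm_mem hP hPdeg hGdeg hinf
    · exact truncQM.mono (Nat.zero_le _) hone
    obtain ⟨a, ha⟩ := Function.ne_iff.1 hu
    have hcard : Fintype.card {i // i ≠ a} = Fintype.card ι - 1 := Set.card_ne_eq a
    let rows := Set.range (P *ᵥ (C ∘ u))
    have hrows_deg : ∀ g ∈ G ∪ rows, g.totalDegree ≤ 1 := by
      rintro g (hg | ⟨i, rfl⟩)
      exacts [hGdeg g hg, totalDegree_mulVec_C_le hPdeg u i]
    have hsub_inf : feasibleSet (P.submatrix Subtype.val Subtype.val) (G ∪ rows) = ∅ :=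
      Set.subset_empty_iff.1 <| hinf ▸ feasibleSet_submatrix_subset hP ha
        (e := ((↑) : {i // i ≠ a} → ι)) Subtype.val_injective fun i hi => ⟨⟨i, hi⟩, rfl⟩
    have hcard_lt : Fintype.card {i // i ≠ a} < Fintype.card ι :=
      Fintype.card_subtype_lt (not_not.2 rfl)
    have hsub := ih _ hcard_lt (hP.submatrix Subtype.val) (fun i j => hPdeg i.1 j.1) hrows_deg
      hsub_inf rfl
    rw [hcard] at hsub
    refine truncQM.neg_one_mem_of_mem_relaxation
      (truncQM.submatrix_le_relaxation Subtype.val_injective ?_ ?_ hsub)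
    · gcongr <;> lia
    · rintro q hq _ ⟨i, rfl⟩
      exact truncQM.mul_mulVec_mem_relaxation hP hPdeg hu hneg hq i

section Pencil

variable {n m : ℕ} (A : Fin (n + 1) → Matrix (Fin m) (Fin m) ℝ)

theorem map_eval_pencilPoly (x : Fin n → ℝ) : (pencilPoly A).map (eval x) = pencilEval A x := by
  ext a b
  simp [pencilPoly, pencilEval, Matrix.sum_apply]

theorem isSymm_pencilPoly {A : Fin (n + 1) → Matrix (Fin m) (Fin m) ℝ}
    (hA : ∀ i, (A i).IsSymm) : (pencilPoly A).IsSymm :=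
  .ext fun a b => by simp only [pencilPoly, (hA _).apply]

theorem totalDegree_pencilPoly_le_one (a b : Fin m) : (pencilPoly A a b).totalDegree ≤ 1 := by
  refine (totalDegree_add _ _).trans (max_le (by simp) (totalDegree_finsetSum_le fun i _ => ?_))
  exact (totalDegree_mul _ _).trans (by simp)

theorem feasibleSet_pencilPoly_empty : feasibleSet (pencilPoly A) ∅ = specSet A := by
  simp [feasibleSet, specSet, map_eval_pencilPoly]

theorem vLv_eq_dotProduct_mulVec (v : Fin m → MvPolynomial (Fin n) ℝ) :
    vLv A v = v ⬝ᵥ pencilPoly A *ᵥ v := by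
  simp only [vLv, dotProduct, mulVec, Finset.mul_sum, mul_assoc]

/-- The truncated quadratic module `M_L^(d)` of the pencil `L`, as an additive submonoid. -/
def memQMdegSubmonoid (d : ℕ) : AddSubmonoid (MvPolynomial (Fin n) ℝ) where
  carrier := {f | memQMdeg A d f}
  zero_mem' := ⟨0, 0, Fin.elim0, Fin.elim0, fun i => i.elim0, fun i => i.elim0, by simp⟩
  add_mem' := by
    rintro _ _ ⟨k₁, k₂, q, v, hq, hv, rfl⟩ ⟨k₁', k₂', q', v', hq', hv', rfl⟩
    refine ⟨k₁ + k₁', k₂ + k₂', Fin.append q q', Fin.append v v', fun i => ?_, fun j => ?_, ?_⟩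
    · induction i using Fin.addCases <;> simp [hq, hq']
    · induction j using Fin.addCases <;> simp [hv, hv']
    · simp only [Fin.sum_univ_add, Fin.append_left, Fin.append_right]
      ring

theorem truncQM_pencilPoly_le (d : ℕ) : truncQM (pencilPoly A) ∅ d ≤ memQMdegSubmonoid A d :=
  truncQM.le_of_generators_mem
    (fun q hq => ⟨1, 0, fun _ => q, Fin.elim0, fun _ => hq, fun j => j.elim0, by simp⟩)
    (fun v hv => ⟨0, 1, Fin.elim0, fun _ => v, fun i => i.elim0, fun _ => hv, by
      simp [vLv_eq_dotProduct_mulVec]⟩)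
    fun _ _ _ hg => hg.elim

end Pencil

/-- **Theorem (exponential degree bound in the size of the pencil).** If `L` is an
infeasible linear pencil of size `m`, then `-1 ∈ M_L^(2^(m-1) - 1)`. -/
theorem neg_one_mem_truncatedQM_two_pow_size
    (n m : ℕ) (A : Fin (n+1) → Matrix (Fin m) (Fin m) ℝ)
    (hsymm : ∀ i, (A i).IsSymm)
    (hinf : specSet A = ∅) :
    memQMdeg A (2^(m-1) - 1) (-1) := by
  have hcert := neg_one_mem_truncatedQM_two_pow_size_general (isSymm_pencilPoly hsymm)
    (totalDegree_pencilPoly_le_one A) (by simp) ((feasibleSet_pencilPoly_empty A).trans hinf)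
  rw [Fintype.card_fin] at hcert
  exact truncQM_pencilPoly_le A _ hcert
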